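/- arXiv:1605.09701 — 3 statements merged into one kernel-verified Lean document; each statement's English description precedes it below -/
import Mathlib

section
/- Let P be the R-measure and let X be an ℝ²-valued random variable with distribution P. Then the expectation of X is E(X) = (1/2, √3/6), and the variance V := E‖X − (1/2, √3/6)‖² = ∫ ‖x − (1/2, √3/6)‖² dP(x) equals 1/6. -/
open MeasureTheory ENNReal

noncomputable section

abbrev E2 : Type := EuclideanSpace ℝ (Fin 2)

/-- The point (a, b) of the Euclidean plane. -/
def pt (a b : ℝ) : E2 := (WithLp.equiv 2 (Fin 2 → ℝ)).symm ![a, b]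

/-- S₁(x) = x/3. -/
def S1 : E2 → E2 := fun x => (3 : ℝ)⁻¹ • x

/-- S₂(x) = x/3 + (2/3, 0). -/
def S2 : E2 → E2 := fun x => (3 : ℝ)⁻¹ • x + pt (2/3) 0

/-- S₃(x) = x/3 + (1/3, √3/3). -/
def S3 : E2 → E2 := fun x => (3 : ℝ)⁻¹ • x + pt (1/3) (Real.sqrt 3 / 3)

def Smap : Fin 3 → E2 → E2 := ![S1, S2, S3]

/-- For a word ω = ω₁⋯ω_k ∈ {1,2,3}^k, the composition S_ω = S_{ω₁} ∘ ⋯ ∘ S_{ω_k}. -/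
def Sword {k : ℕ} (ω : Fin k → Fin 3) : E2 → E2 :=
  fun x => (List.ofFn fun i => Smap (ω i)).foldr (fun g y => g y) x

/-- The closed triangle with vertices (0,0), (1,0), (1/2, √3/2). -/
def Tri : Set E2 := convexHull ℝ {pt 0 0, pt 1 0, pt (1/2) (Real.sqrt 3 / 2)}

/-- The distortion error ∫ min_{a ∈ α} ‖x − a‖² dμ of a set α of points. -/
def err (μ : Measure E2) (α : Set E2) : ℝ≥0∞ :=
  ∫⁻ x, ⨅ a ∈ α, ENNReal.ofReal (‖x - a‖ ^ 2) ∂μ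

/-- The n-th quantization error V_n(μ). -/
def quantErr (μ : Measure E2) (n : ℕ) : ℝ≥0∞ :=
  ⨅ (α : Set E2) (_ : α.Finite ∧ α.ncard ≤ n), err μ α

/-- α is an optimal set of n-means for μ. -/
def IsOptimal (μ : Measure E2) (n : ℕ) (α : Set E2) : Prop :=
  α.Finite ∧ α.ncard ≤ n ∧ err μ α = quantErr μ n

/-! A stationary measure of a contractive iterated function system has bounded support, so its
moments are finite and can be computed by integrating polynomials against the stationarity equation.
For affine maps `S i` the mean `m` satisfies `m = ∑ i, p i • S i m`; if `S i` is moreover a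
similarity of ratio `r i`, splitting each second moment about `m` into variance and squared bias
gives `V = ∑ i, p i * (r i ^ 2 * V + ‖S i m - m‖ ^ 2)`. For homotheties of common ratio `r` centred
at points `a i` this yields `m = ∑ i, p i • a i` and
`V = (1 - r) / (1 + r) * ∑ i, p i * ‖a i - m‖ ^ 2`. The R-measure is the case of ratio `1/3` and the
vertices of the unit equilateral triangle, whose centroid is at distance `1/√3` from each vertex. -/

section Moments

variable {Ω E : Type*} [MeasurableSpace Ω] [NormedAddCommGroup E] {μ : Measure Ω}
  [IsProbabilityMeasure μ]

lemma integral_continuousAffineMap_comp {F : Type*} [NormedAddCommGroup F] [NormedSpace ℝ E]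
    [NormedSpace ℝ F] [CompleteSpace E] [CompleteSpace F] (A : E →ᴬ[ℝ] F) {f : Ω → E}
    (hf : Integrable f μ) :
    ∫ ω, A (f ω) ∂μ = A (∫ ω, f ω ∂μ) := by
  have hA (x : E) : A x = A.contLinear x + A 0 := congrFun A.decomp x
  simp only [hA (f _), hA (∫ ω, f ω ∂μ)]
  rw [integral_add (A.contLinear.integrable_comp hf) (integrable_const _),
    A.contLinear.integral_comp_comm hf, integral_const, probReal_univ, one_smul]

lemma integral_norm_sub_sq_eq_add [InnerProductSpace ℝ E] [CompleteSpace E] {f : Ω → E}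
    (hf : MemLp f 2 μ) (c : E) :
    ∫ ω, ‖f ω - c‖ ^ 2 ∂μ = ∫ ω, ‖f ω - ∫ ω', f ω' ∂μ‖ ^ 2 ∂μ + ‖∫ ω, f ω ∂μ - c‖ ^ 2 := by
  set m := ∫ ω, f ω ∂μ with hm
  have hcentered : MemLp (fun ω => f ω - m) 2 μ := hf.sub (memLp_const m)
  have hint : Integrable (fun ω => f ω - m) μ := hcentered.integrable one_le_two
  have hcross : ∫ ω, inner ℝ (m - c) (f ω - m) ∂μ = 0 := by
    rw [integral_inner hint, integral_sub (hf.integrable one_le_two) (integrable_const m),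
      integral_const, probReal_univ, one_smul, ← hm, sub_self, inner_zero_right]
  have hexpand (ω : Ω) :
      ‖f ω - c‖ ^ 2 = ‖f ω - m‖ ^ 2 + 2 * inner ℝ (m - c) (f ω - m) + ‖m - c‖ ^ 2 := by
    rw [← sub_add_sub_cancel (f ω) m c, norm_add_sq_real, real_inner_comm]
  have hsq_int := hcentered.integrable_norm_pow two_ne_zero
  have hcross_int := (hint.const_inner (𝕜 := ℝ) (m - c)).const_mul 2
  have hsum_int : Integrable (fun ω => ‖f ω - m‖ ^ 2 + 2 * inner ℝ (m - c) (f ω - m)) μ :=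
    hsq_int.add hcross_int
  simp only [hexpand]
  rw [integral_add hsum_int (integrable_const _), integral_add hsq_int hcross_int,
    integral_const_mul, hcross, integral_const, probReal_univ, one_smul, mul_zero, add_zero]

end Moments

lemma dist_homothety_homothety {𝕜 V P : Type*} [NormedField 𝕜] [SeminormedAddCommGroup V]
    [NormedSpace 𝕜 V] [PseudoMetricSpace P] [NormedAddTorsor V P] (a : P) (r : 𝕜) (x y : P) :
    dist (AffineMap.homothety a r x) (AffineMap.homothety a r y) = ‖r‖ * dist x y := by
  rw [AffineMap.homothety_apply, AffineMap.homothety_apply, dist_vadd_cancel_right, dist_smul₀,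
    dist_vsub_cancel_right]

section Stationary

open scoped NNReal

variable {ι α : Type*} [Fintype ι] [MeasurableSpace α]

/-- `μ` is a stationary (self-similar) measure of the iterated function system `S` with weights `p`,
that is, a fixed point of the Hutchinson operator `ν ↦ ∑ i, p i • ν.map (S i)`. The weights are not
required to add up to `1`. -/
def IsStationaryMeasure (S : ι → α → α) (p : ι → ℝ≥0) (μ : Measure α) : Prop :=
  μ = ∑ i, p i • μ.map (S i)

namespace IsStationaryMeasure

variable {S : ι → α → α} {p : ι → ℝ≥0} {μ : Measure α}

lemma integral_eq_sum {F : Type*} [NormedAddCommGroup F] [NormedSpace ℝ F]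
    (h : IsStationaryMeasure S p μ) (hS : ∀ i, Measurable (S i)) {f : α → F} (hf : Integrable f μ) :
    ∫ x, f x ∂μ = ∑ i, p i • ∫ x, f (S i x) ∂μ := by
  have hpieces : ∀ i ∈ Finset.univ, Integrable f (p i • μ.map (S i)) := by
    rwa [← integrable_finsetSum_measure, ← h]
  conv_lhs => rw [h]
  rw [integral_finsetSum_measure hpieces]
  refine Finset.sum_congr rfl fun i hi => ?_
  rw [integral_smul_nnreal_measure]
  rcases eq_or_ne (p i) 0 with hp | hp
  · rw [hp, zero_smul, zero_smul]
  · have hfi : Integrable f (μ.map (S i)) :=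
      (integrable_smul_measure (ENNReal.coe_ne_zero.2 hp) ENNReal.coe_ne_top).1 (hpieces i hi)
    rw [integral_map (hS i).aemeasurable hfi.aestronglyMeasurable]

lemma sum_weights [IsProbabilityMeasure μ] (h : IsStationaryMeasure S p μ)
    (hS : ∀ i, Measurable (S i)) : ∑ i, p i = 1 := by
  have hone := h.integral_eq_sum hS (integrable_const (1 : ℝ))
  simp only [integral_const, probReal_univ, NNReal.smul_def, smul_eq_mul, mul_one] at hone
  exact_mod_cast hone.symm

lemma ae_eq_zero_of_comp_le_mul [IsProbabilityMeasure μ] (h : IsStationaryMeasure S p μ)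
    (hS : ∀ i, Measurable (S i)) {φ : α → ℝ} (hφ : Measurable φ) (hφ0 : ∀ x, 0 ≤ φ x) {K : ℝ}
    (hK : K < 1) (hφS : ∀ i x, φ (S i x) ≤ K * φ x) : φ =ᵐ[μ] 0 := by
  -- `φ` itself need not be integrable, so the integrals of `φ` and `K φ` are compared after
  -- composing with the bounded, strictly increasing function `arctan`.
  have hint {g : α → ℝ} (hg : Measurable g) : Integrable (fun x => Real.arctan (g x)) μ :=
    .of_bound (Real.measurable_arctan.comp hg).aestronglyMeasurable (Real.pi / 2)
      (.of_forall fun x => (abs_lt.2 ⟨Real.neg_pi_div_two_lt_arctan _,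
        Real.arctan_lt_pi_div_two _⟩).le)
  have hKφ : Measurable fun x => K * φ x := hφ.const_mul K
  have hle (x : α) : Real.arctan (K * φ x) ≤ Real.arctan (φ x) :=
    Real.arctan_mono (mul_le_of_le_one_left (hφ0 x) hK.le)
  have hge : ∫ x, Real.arctan (φ x) ∂μ ≤ ∫ x, Real.arctan (K * φ x) ∂μ := calc
    _ = ∑ i, p i • ∫ x, Real.arctan (φ (S i x)) ∂μ := h.integral_eq_sum hS (hint hφ)
    _ ≤ ∑ i, p i • ∫ x, Real.arctan (K * φ x) ∂μ := by
      gcongr with i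
      · exact hint (hφ.comp (hS i))
      · exact hint hKφ
      · exact fun x => Real.arctan_mono (hφS i x)
    _ = ∫ x, Real.arctan (K * φ x) ∂μ := by
      rw [← Finset.sum_smul, h.sum_weights hS, one_smul]
  have heq := (integral_eq_iff_of_ae_le (hint hKφ) (hint hφ) (.of_forall hle)).1
    ((integral_mono (hint hKφ) (hint hφ) hle).antisymm hge)
  filter_upwards [heq] with x hx
  have hfix : K * φ x = φ x := Real.arctan_injective hx
  exact (mul_left_eq_self₀.1 hfix).resolve_left hK.ne

lemma ae_dist_le_of_lipschitzWith {X : Type*} [PseudoMetricSpace X] [MeasurableSpace X]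
    [BorelSpace X] {S : ι → X → X} {p : ι → ℝ≥0} {μ : Measure X}
    [IsProbabilityMeasure μ] (h : IsStationaryMeasure S p μ) {K : ℝ≥0} (hK : K < 1)
    (hSK : ∀ i, LipschitzWith K (S i)) {x₀ : X} {R : ℝ}
    (hR : ∀ i, dist (S i x₀) x₀ ≤ (1 - K) * R) : ∀ᵐ x ∂μ, dist x x₀ ≤ R := by
  have hcontr (i : ι) (x : X) : max (dist (S i x) x₀ - R) 0 ≤ K * max (dist x x₀ - R) 0 := by
    have hdist : dist (S i x) x₀ ≤ K * dist x x₀ + (1 - K) * R :=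
      (dist_triangle _ _ _).trans (add_le_add ((hSK i).dist_le_mul x x₀) (hR i))
    rw [mul_max_of_nonneg _ _ K.coe_nonneg, mul_zero]
    exact max_le_max_right 0 (by linarith)
  have hzero := h.ae_eq_zero_of_comp_le_mul (fun i => (hSK i).continuous.measurable)
    (φ := fun x => max (dist x x₀ - R) 0) (by fun_prop) (fun _ => le_max_right _ _)
    (NNReal.coe_lt_one.2 hK) hcontr
  filter_upwards [hzero] with x hx
  exact sub_nonpos.1 (max_eq_right_iff.1 hx)

section Affine

variable {E : Type*} [NormedAddCommGroup E] [MeasurableSpace E] [BorelSpace E]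
  {μ : Measure E} [IsProbabilityMeasure μ]

lemma memLp_id_of_lipschitzWith [SecondCountableTopology E] {S : ι → E → E}
    (h : IsStationaryMeasure S p μ) {K : ℝ≥0} (hK : K < 1)
    (hSK : ∀ i, LipschitzWith K (S i)) (q : ℝ≥0∞) : MemLp id q μ := by
  have hK' : (0 : ℝ) < 1 - K := sub_pos.2 (NNReal.coe_lt_one.2 hK)
  have hbound : ∀ᵐ x ∂μ, dist x 0 ≤ (∑ i, dist (S i 0) 0) / (1 - K) := by
    refine h.ae_dist_le_of_lipschitzWith hK hSK fun i => ?_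
    rw [mul_div_cancel₀ _ hK'.ne']
    exact Finset.single_le_sum (f := fun i => dist (S i 0) 0) (fun _ _ => dist_nonneg)
      (Finset.mem_univ i)
  refine .of_bound aestronglyMeasurable_id ((∑ i, dist (S i 0) 0) / (1 - K)) ?_
  simpa only [dist_zero_right, id_eq] using hbound

lemma integral_id_eq_sum [NormedSpace ℝ E] [CompleteSpace E] {S : ι → E →ᴬ[ℝ] E}
    (h : IsStationaryMeasure (fun i => S i) p μ) (hμ : Integrable id μ) :
    ∫ x, x ∂μ = ∑ i, p i • S i (∫ x, x ∂μ) := calc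
  ∫ x, x ∂μ = ∑ i, p i • ∫ x, S i x ∂μ :=
    h.integral_eq_sum (fun i => (S i).continuous.measurable) hμ
  _ = ∑ i, p i • S i (∫ x, x ∂μ) := by
    have hcomm (i : ι) : ∫ x, S i x ∂μ = S i (∫ x, x ∂μ) :=
      integral_continuousAffineMap_comp (S i) hμ
    simp only [hcomm]

lemma integral_norm_sub_mean_sq_eq [InnerProductSpace ℝ E] [CompleteSpace E] {S : ι → E →ᴬ[ℝ] E}
    (h : IsStationaryMeasure (fun i => S i) p μ) (hμ : MemLp id 2 μ) {r : ι → ℝ}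
    (hr : ∀ i x y, dist (S i x) (S i y) = r i * dist x y) :
    ∫ x, ‖x - ∫ y, y ∂μ‖ ^ 2 ∂μ = ∑ i, p i *
      (r i ^ 2 * ∫ x, ‖x - ∫ y, y ∂μ‖ ^ 2 ∂μ + ‖S i (∫ x, x ∂μ) - ∫ x, x ∂μ‖ ^ 2) := by
  set m := ∫ x, x ∂μ
  have hint : Integrable id μ := hμ.integrable one_le_two
  have hSmem (i : ι) : MemLp (S i) 2 μ := by
    rw [(S i).decomp]
    exact ((S i).contLinear.comp_memLp' hμ).add (memLp_const _)
  have hmoment (i : ι) :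
      ∫ x, ‖S i x - m‖ ^ 2 ∂μ = r i ^ 2 * ∫ x, ‖x - m‖ ^ 2 ∂μ + ‖S i m - m‖ ^ 2 := by
    have hmean : ∫ x, S i x ∂μ = S i m := integral_continuousAffineMap_comp (S i) hint
    rw [integral_norm_sub_sq_eq_add (hSmem i), hmean, ← integral_const_mul]
    simp only [← dist_eq_norm, hr, mul_pow]
  calc ∫ x, ‖x - m‖ ^ 2 ∂μ = ∑ i, p i • ∫ x, ‖S i x - m‖ ^ 2 ∂μ :=
        h.integral_eq_sum (fun i => (S i).continuous.measurable) (f := fun x => ‖x - m‖ ^ 2)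
          ((hμ.sub (memLp_const m)).integrable_norm_pow two_ne_zero)
    _ = _ := by simp only [hmoment, NNReal.smul_def, smul_eq_mul]

end Affine

section Homothety

variable {E : Type*} [NormedAddCommGroup E] [MeasurableSpace E] [BorelSpace E]
  [SecondCountableTopology E] {μ : Measure E} [IsProbabilityMeasure μ]
  {a : ι → E} {r : ℝ}

lemma memLp_id_of_homothety [NormedSpace ℝ E]
    (h : IsStationaryMeasure (fun i => AffineMap.homothety (a i) r) p μ) (hr : |r| < 1)
    (q : ℝ≥0∞) : MemLp id q μ := by
  refine h.memLp_id_of_lipschitzWith (K := ‖r‖₊) ?_ (fun i => ?_) q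
  · exact_mod_cast hr
  · exact .of_dist_le_mul fun x y => (dist_homothety_homothety (a i) r x y).le

lemma integral_id_of_homothety [NormedSpace ℝ E] [CompleteSpace E]
    (h : IsStationaryMeasure (fun i => AffineMap.homothety (a i) r) p μ) (hr : |r| < 1) :
    ∫ x, x ∂μ = ∑ i, p i • a i := by
  have hcont (i : ι) : Continuous (AffineMap.homothety (a i) r) :=
    AffineMap.homothety_continuous (a i) r
  have hmean := h.integral_id_eq_sum (S := fun i => ⟨_, hcont i⟩)
    ((h.memLp_id_of_homothety hr 1).integrable le_rfl)
  set m := ∫ x, x ∂μ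
  have hsum : ∑ i, p i • AffineMap.homothety (a i) r m = r • m + (1 - r) • ∑ i, p i • a i := by
    have hterm (i : ι) :
        p i • AffineMap.homothety (a i) r m = p i • r • m + (1 - r) • p i • a i := by
      simp only [AffineMap.homothety_apply, vsub_eq_sub, vadd_eq_add, NNReal.smul_def]
      module
    simp only [hterm]
    rw [Finset.sum_add_distrib, ← Finset.sum_smul,
      h.sum_weights (fun i => (hcont i).measurable), one_smul, ← Finset.smul_sum]
  have hfix : (1 - r) • m = (1 - r) • ∑ i, p i • a i := by
    rw [sub_smul, one_smul, sub_eq_iff_eq_add', ← hsum]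
    exact hmean
  exact smul_right_injective E (sub_ne_zero.2 (abs_lt.1 hr).2.ne') hfix

lemma integral_norm_sub_mean_sq_of_homothety [InnerProductSpace ℝ E] [CompleteSpace E]
    (h : IsStationaryMeasure (fun i => AffineMap.homothety (a i) r) p μ) (hr : |r| < 1) :
    ∫ x, ‖x - ∫ y, y ∂μ‖ ^ 2 ∂μ = (1 - r) / (1 + r) * ∑ i, p i * ‖a i - ∫ x, x ∂μ‖ ^ 2 := by
  have hcont (i : ι) : Continuous (AffineMap.homothety (a i) r) :=
    AffineMap.homothety_continuous (a i) r
  have hvar := h.integral_norm_sub_mean_sq_eq (S := fun i => ⟨_, hcont i⟩)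
    (h.memLp_id_of_homothety hr 2) (r := fun _ => |r|) fun i => dist_homothety_homothety (a i) r
  set m := ∫ x, x ∂μ
  set V := ∫ x, ‖x - m‖ ^ 2 ∂μ
  have hbias (i : ι) : ‖AffineMap.homothety (a i) r m - m‖ ^ 2 = (1 - r) ^ 2 * ‖a i - m‖ ^ 2 := by
    rw [← dist_eq_norm, dist_homothety_self, mul_pow, Real.norm_eq_abs, sq_abs, dist_eq_norm]
  have hweights : ∑ i, (p i : ℝ) = 1 := by
    exact_mod_cast h.sum_weights fun i => (hcont i).measurable
  have hV : V = r ^ 2 * V + (1 - r) ^ 2 * ∑ i, p i * ‖a i - m‖ ^ 2 := calc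
    V = ∑ i, p i * (r ^ 2 * V + (1 - r) ^ 2 * ‖a i - m‖ ^ 2) := by
      simpa only [sq_abs, ContinuousAffineMap.coe_mk, hbias] using hvar
    _ = (∑ i, (p i : ℝ)) * (r ^ 2 * V) + (1 - r) ^ 2 * ∑ i, p i * ‖a i - m‖ ^ 2 := by
      rw [Finset.sum_mul, Finset.mul_sum, ← Finset.sum_add_distrib]
      exact Finset.sum_congr rfl fun i _ => by ring
    _ = r ^ 2 * V + (1 - r) ^ 2 * ∑ i, p i * ‖a i - m‖ ^ 2 := by rw [hweights, one_mul]
  obtain ⟨hr_neg, hr_pos⟩ := abs_lt.1 hr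
  have hadd : 1 + r ≠ 0 := by linarith
  have hsub : 1 - r ≠ 0 := by linarith
  rw [div_mul_eq_mul_div, eq_div_iff hadd]
  exact mul_left_cancel₀ hsub (by linear_combination hV)

end Homothety

end IsStationaryMeasure

end Stationary

section Triangle

/-- The vertices of the unit equilateral triangle: the fixed points of `S1`, `S2`, `S3`, in this
order. -/
def triangleVertex : Fin 3 → E2 := ![pt 0 0, pt 1 0, pt (1/2) (√3 / 2)]

lemma homothety_triangleVertex (i : Fin 3) :
    ⇑(AffineMap.homothety (triangleVertex i) (3⁻¹ : ℝ)) = Smap i := by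
  ext x j
  fin_cases i <;> fin_cases j <;>
    simp [AffineMap.homothety_apply, triangleVertex, Smap, S1, S2, S3, pt] <;> ring

lemma isStationaryMeasure_homothety_triangleVertex {P : Measure E2}
    (hP : P = (3 : ℝ≥0∞)⁻¹ • (P.map S1 + P.map S2 + P.map S3)) :
    IsStationaryMeasure (fun i => AffineMap.homothety (triangleVertex i) (3⁻¹ : ℝ))
      (fun _ => 3⁻¹) P := by
  have hcoe (μ : Measure E2) : (3⁻¹ : NNReal) • μ = (3 : ℝ≥0∞)⁻¹ • μ := by
    rw [ENNReal.smul_def, ENNReal.coe_inv three_ne_zero, ENNReal.coe_ofNat]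
  simp only [IsStationaryMeasure, homothety_triangleVertex, ← Finset.smul_sum, Fin.sum_univ_three,
    hcoe]
  exact hP

lemma sum_triangleVertex :
    ∑ i, (3⁻¹ : NNReal) • triangleVertex i = pt (1/2) (√3 / 6) := by
  ext j
  fin_cases j <;> simp [Fin.sum_univ_three, triangleVertex, pt, NNReal.smul_def] <;> ring

lemma norm_pt_sub_pt_sq (a b c d : ℝ) : ‖pt a b - pt c d‖ ^ 2 = (a - c) ^ 2 + (b - d) ^ 2 := by
  rw [EuclideanSpace.real_norm_sq_eq, Fin.sum_univ_two]
  rfl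

lemma norm_triangleVertex_sub_centroid_sq (i : Fin 3) :
    ‖triangleVertex i - pt (1/2) (√3 / 6)‖ ^ 2 = 1 / 3 := by
  have hsqrt : √3 ^ 2 = (3 : ℝ) := Real.sq_sqrt zero_le_three
  fin_cases i <;> refine (norm_pt_sub_pt_sq _ _ _ _).trans ?_
  · linear_combination hsqrt / 36
  · linear_combination hsqrt / 36
  · linear_combination hsqrt / 9

end Triangle

/-- For the R-measure P with random variable X distributed as P: E(X) = (1/2, √3/6) and
V = E‖X − (1/2, √3/6)‖² = 1/6. -/
theorem stmt_2 (P : Measure E2) [IsProbabilityMeasure P]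
    (hP : P = (3 : ℝ≥0∞)⁻¹ • (P.map S1 + P.map S2 + P.map S3)) :
    (∫ x, x ∂P) = pt (1/2) (Real.sqrt 3 / 6)
      ∧ (∫ x, ‖x - pt (1/2) (Real.sqrt 3 / 6)‖ ^ 2 ∂P) = 1 / 6 := by
  have hratio : |(3⁻¹ : ℝ)| < 1 := by norm_num [abs_of_pos]
  have hstat := isStationaryMeasure_homothety_triangleVertex hP
  have hmean : ∫ x, x ∂P = pt (1/2) (√3 / 6) :=
    (hstat.integral_id_of_homothety hratio).trans sum_triangleVertex
  have hvar := hstat.integral_norm_sub_mean_sq_of_homothety hratio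
  simp only [hmean, norm_triangleVertex_sub_centroid_sq] at hvar
  refine ⟨hmean, hvar.trans ?_⟩
  norm_num [Fin.sum_univ_three]

end
end

section
/- Let P be the R-measure, c = (1/2, √3/6), and k ≥ 1. For every word ω ∈ {1,2,3}^k and every point b ∈ ℝ², one has ∫_{△_ω} ‖x − b‖² dP(x) = (1/3^k) · ( (1/9^k)·(1/6) + ‖S_ω(c) − b‖² ), where △_ω = S_ω(△) and △ is the closed triangle with vertices (0,0), (1,0), (1/2, √3/2) (the convex hull of these three points). -/
open MeasureTheory ENNReal

noncomputable section

/-!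
A self-similar measure lives on the compact set `K` left invariant by its maps: applying the
self-similarity equation repeatedly shows that every neighbourhood of `K` carries at most the mass
of an arbitrarily small one. If moreover the pieces `S i '' K` are disjoint, only the `i`-th summand
of the equation charges `S i '' K`; iterating, `μ` restricted to the piece of a word is a multiple
of the image of `μ` under the composition along that word. For homotheties of a common ratio `r`
this composition multiplies differences by `r ^ k`, so the parallel axis theorem reduces the
integral to the mean and the variance of `μ`, and integrating the self-similarity equation gives a
linear equation for each of these two.
-/

section SelfSimilar

open Metric Set Filter Topology Function NNReal

variable {ι X : Type*}

/-- The composition `S (ω 0) ∘ ⋯ ∘ S (ω (k - 1))` along a word `ω`, which addresses the `k`-th level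
pieces of the attractor of an iterated function system `S`. It has the shape of `Sword`, which is
the case `S = Smap` definitionally. -/
def wordMap (S : ι → X → X) {k : ℕ} (ω : Fin k → ι) : X → X :=
  fun x => (List.ofFn fun i => S (ω i)).foldr (fun g y => g y) x

lemma wordMap_zero (S : ι → X → X) (ω : Fin 0 → ι) : wordMap S ω = id := by
  ext x
  simp [wordMap]

lemma wordMap_succ (S : ι → X → X) {k : ℕ} (ω : Fin (k + 1) → ι) :
    wordMap S ω = S (ω 0) ∘ wordMap S (Fin.tail ω) := by
  ext x
  simp [wordMap, List.ofFn_succ, Fin.tail]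

lemma mapsTo_wordMap {S : ι → X → X} {K : Set X} (hS : ∀ i, MapsTo (S i) K K) {k : ℕ}
    (ω : Fin k → ι) : MapsTo (wordMap S ω) K K := by
  induction k with
  | zero => simpa only [wordMap_zero] using mapsTo_id K
  | succ k ih => simpa only [wordMap_succ] using (hS _).comp (ih _)

lemma wordMap_sub {R E : Type*} [CommRing R] [AddCommGroup E] [Module R E] {S : ι → E → E} {r : R}
    (hS : ∀ i x y, S i x - S i y = r • (x - y)) {k : ℕ} (ω : Fin k → ι) (x y : E) :
    wordMap S ω x - wordMap S ω y = r ^ k • (x - y) := by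
  induction k with
  | zero => simp [wordMap_zero]
  | succ k ih => rw [wordMap_succ, comp_apply, comp_apply, hS, ih, smul_smul, pow_succ']

variable [MeasurableSpace X]

lemma measurableEmbedding_wordMap {S : ι → X → X} (hS : ∀ i, MeasurableEmbedding (S i)) {k : ℕ}
    (ω : Fin k → ι) : MeasurableEmbedding (wordMap S ω) := by
  induction k with
  | zero => simpa only [wordMap_zero] using MeasurableEmbedding.id
  | succ k ih => simpa only [wordMap_succ] using (hS _).comp (ih _)

/-- `μ` is self-similar for the maps `S i` with weights `p i`: it is the `p`-weighted average of its
images under the maps. -/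
def IsSelfSimilar [Fintype ι] (p : ι → ℝ≥0) (S : ι → X → X) (μ : Measure X) : Prop :=
  μ = ∑ i, p i • μ.map (S i)

namespace IsSelfSimilar

variable [Fintype ι] {p : ι → ℝ≥0} {S : ι → X → X} {μ : Measure X}

lemma measure_eq (hμ : IsSelfSimilar p S μ) (hS : ∀ i, Measurable (S i)) {A : Set X}
    (hA : MeasurableSet A) : μ A = ∑ i, p i * μ (S i ⁻¹' A) := by
  have h : μ A = (∑ i, p i • μ.map (S i)) A := congrArg (fun ν : Measure X => ν A) hμ
  simpa only [Measure.finsetSum_apply, Measure.smul_apply, Measure.map_apply (hS _) hA,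
    ENNReal.smul_def, smul_eq_mul] using h

lemma sum_weights_eq_one [IsProbabilityMeasure μ] (hμ : IsSelfSimilar p S μ)
    (hS : ∀ i, Measurable (S i)) : ∑ i, p i = 1 := by
  have h := hμ.measure_eq hS MeasurableSet.univ
  simp only [preimage_univ, measure_univ, mul_one] at h
  exact_mod_cast h.symm

lemma measure_le_of_mapsTo [IsProbabilityMeasure μ] (hμ : IsSelfSimilar p S μ)
    (hS : ∀ i, Measurable (S i)) {A B : Set X} (hB : MeasurableSet B)
    (hAB : ∀ i, MapsTo (S i) A B) : μ A ≤ μ B := by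
  have hp : ∑ i, (p i : ℝ≥0∞) = 1 := by exact_mod_cast hμ.sum_weights_eq_one hS
  calc μ A = ∑ i, p i * μ A := by rw [← Finset.sum_mul, hp, one_mul]
    _ ≤ ∑ i, p i * μ (S i ⁻¹' B) := by
      gcongr with i
      exact hAB i
    _ = μ B := (hμ.measure_eq hS hB).symm

lemma restrict_image (hμ : IsSelfSimilar p S μ) (hS : ∀ i, MeasurableEmbedding (S i)) {K : Set X}
    (hK : ∀ᵐ x ∂μ, x ∈ K) (hdisj : Pairwise (Disjoint on fun i => S i '' K)) (j : ι) {B : Set X}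
    (hB : B ⊆ K) : μ.restrict (S j '' B) = p j • (μ.restrict B).map (S j) := by
  have null_of_ne (i : ι) (hij : i ≠ j) : μ.restrict (S i ⁻¹' (S j '' B)) = 0 := by
    refine Measure.restrict_eq_zero.2 (measure_mono_null ?_ (ae_iff.1 hK))
    exact fun x hx hxK => (hdisj hij).le_bot ⟨mem_image_of_mem _ hxK, image_mono hB hx⟩
  calc μ.restrict (S j '' B)
      = (∑ i, p i • μ.map (S i)).restrict (S j '' B) :=
        congrArg (fun ν : Measure X => ν.restrict (S j '' B)) hμ
    _ = ∑ i, p i • (μ.restrict (S i ⁻¹' (S j '' B))).map (S i) := by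
        simp only [← Measure.sum_fintype, Measure.restrict_sum_of_countable, Measure.restrict_smul,
          (hS _).restrict_map]
    _ = p j • (μ.restrict B).map (S j) := by
        rw [Finset.sum_eq_single j (fun i _ hij => by simp [null_of_ne i hij]) (by simp),
          preimage_image_eq _ (hS j).injective]

lemma restrict_wordMap_image (hμ : IsSelfSimilar p S μ) (hS : ∀ i, MeasurableEmbedding (S i))
    {K : Set X} (hK : ∀ᵐ x ∂μ, x ∈ K) (hSK : ∀ i, MapsTo (S i) K K)
    (hdisj : Pairwise (Disjoint on fun i => S i '' K)) {k : ℕ} (ω : Fin k → ι) :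
    μ.restrict (wordMap S ω '' K) = (∏ i, p (ω i)) • μ.map (wordMap S ω) := by
  induction k with
  | zero => simp [wordMap_zero, Measure.restrict_eq_self_of_ae_mem hK]
  | succ k ih =>
    rw [wordMap_succ, image_comp,
      hμ.restrict_image hS hK hdisj _ (mapsTo_wordMap hSK (Fin.tail ω)).image_subset, ih,
      Measure.map_smul, smul_smul, Fin.prod_univ_succ,
      Measure.map_map (hS _).measurable (measurableEmbedding_wordMap hS _).measurable]
    rfl

lemma integral_eq {F : Type*} [NormedAddCommGroup F] [NormedSpace ℝ F] (hμ : IsSelfSimilar p S μ)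
    (hS : ∀ i, MeasurableEmbedding (S i)) {f : X → F}
    (hf : ∀ i, Integrable (fun x => f (S i x)) μ) :
    ∫ x, f x ∂μ = ∑ i, p i • ∫ x, f (S i x) ∂μ := by
  have hint (i : ι) : Integrable f (p i • μ.map (S i)) :=
    ((hS i).integrable_map_iff.2 (hf i)).smul_measure_nnreal
  calc ∫ x, f x ∂μ = ∫ x, f x ∂(∑ i, p i • μ.map (S i)) :=
        congrArg (fun ν : Measure X => ∫ x, f x ∂ν) hμ
    _ = ∑ i, p i • ∫ x, f (S i x) ∂μ := by
        simp only [integral_finsetSum_measure fun i _ => hint i, integral_smul_nnreal_measure,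
          (hS _).integral_map]

end IsSelfSimilar

lemma mapsTo_thickening_of_lipschitzWith {X Y : Type*} [PseudoEMetricSpace X] [PseudoEMetricSpace Y]
    {f : X → Y} {c : ℝ≥0} (hf : LipschitzWith c f) (hc : 0 < c) {s : Set X} {t : Set Y}
    (hst : MapsTo f s t) (δ : ℝ) : MapsTo f (thickening δ s) (thickening (c * δ) t) := by
  intro x hx
  obtain ⟨z, hz, hxz⟩ := (mem_thickening_iff_exists_edist_lt _ _).1 hx
  refine (mem_thickening_iff_exists_edist_lt _ _).2 ⟨f z, hst hz, (hf x z).trans_lt ?_⟩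
  rw [ENNReal.ofReal_mul c.coe_nonneg, ENNReal.ofReal_coe_nnreal]
  exact ENNReal.mul_lt_mul_right (by exact_mod_cast hc.ne') ENNReal.coe_ne_top hxz

lemma measure_eq_one_of_measure_thickening_le [PseudoMetricSpace X]
    {μ : Measure X} [IsProbabilityMeasure μ] {K : Set X} (hK : K.Nonempty)
    (h : ∀ n : ℕ, μ (thickening n K) ≤ μ K) : μ K = 1 := by
  obtain ⟨z, hz⟩ := hK
  have hmono : Monotone fun n : ℕ => thickening (n : ℝ) K := fun m n hmn =>
    thickening_mono (by exact_mod_cast hmn) K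
  have hunion : ⋃ n : ℕ, thickening (n : ℝ) K = univ := by
    refine eq_univ_of_forall fun x => ?_
    obtain ⟨n, hn⟩ := exists_nat_gt (dist x z)
    exact mem_iUnion.2 ⟨n, mem_thickening_iff.2 ⟨z, hz, hn⟩⟩
  have hlim := tendsto_measure_iUnion_atTop (μ := μ) hmono
  rw [hunion, measure_univ] at hlim
  exact le_antisymm prob_le_one (le_of_tendsto' hlim h)

lemma IsSelfSimilar.ae_mem [PseudoMetricSpace X] [BorelSpace X] [Fintype ι] {p : ι → ℝ≥0}
    {S : ι → X → X} {μ : Measure X} [IsProbabilityMeasure μ] (hμ : IsSelfSimilar p S μ) {c : ℝ≥0}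
    (hc : c < 1) (hS : ∀ i, LipschitzWith c (S i)) {K : Set X} (hKc : IsClosed K)
    (hKne : K.Nonempty) (hSK : ∀ i, MapsTo (S i) K K) : ∀ᵐ x ∂μ, x ∈ K := by
  obtain ⟨q, hcq, hq1⟩ := exists_between hc
  have hq0 : 0 < q := pos_of_gt hcq
  have hshrink (δ : ℝ) : μ (thickening δ K) ≤ μ (thickening (q * δ) K) :=
    hμ.measure_le_of_mapsTo (fun i => (hS i).continuous.measurable)
      isOpen_thickening.measurableSet fun i =>
        mapsTo_thickening_of_lipschitzWith ((hS i).weaken hcq.le) hq0 (hSK i) δ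
  have hshrink_pow (δ : ℝ) (n : ℕ) : μ (thickening δ K) ≤ μ (thickening (q ^ n * δ) K) := by
    induction n with
    | zero => simp
    | succ n ih => simpa only [pow_succ', mul_assoc] using ih.trans (hshrink _)
  have hle {δ : ℝ} (hδ : 0 < δ) : μ (thickening δ K) ≤ μ K := by
    have hscale : Tendsto (fun n : ℕ => (q : ℝ) ^ n * δ) atTop (𝓝[>] 0) := by
      refine tendsto_nhdsWithin_iff.2 ⟨?_, Eventually.of_forall fun n => mem_Ioi.2 ?_⟩
      · simpa using (tendsto_pow_atTop_nhds_zero_of_lt_one q.coe_nonneg hq1).mul_const δ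
      · positivity
    exact ge_of_tendsto' ((tendsto_measure_thickening_of_isClosed
      ⟨1, one_pos, measure_ne_top _ _⟩ hKc).comp hscale) (hshrink_pow δ)
  refine (mem_ae_iff_prob_eq_one hKc.measurableSet).2
    (measure_eq_one_of_measure_thickening_le hKne fun n => ?_)
  exact (measure_mono (thickening_mono (by linarith) K)).trans (hle n.cast_add_one_pos)

end SelfSimilar

section SecondMoment

variable {E : Type*} [NormedAddCommGroup E]

lemma memLp_id_of_ae_mem_isCompact [MeasurableSpace E] [BorelSpace E] {μ : Measure E}
    [IsFiniteMeasure μ] {K : Set E} (hK : IsCompact K) (hμK : ∀ᵐ x ∂μ, x ∈ K) (q : ℝ≥0∞) :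
    MemLp id q μ := by
  obtain ⟨C, hC⟩ := hK.isBounded.exists_norm_le
  have hid : IntegrableOn id K μ := continuous_id.continuousOn.integrableOn_compact hK
  rw [IntegrableOn, Measure.restrict_eq_self_of_ae_mem hμK] at hid
  exact .of_bound hid.aestronglyMeasurable C (hμK.mono hC)

lemma integral_of_sub_eq_smul [MeasurableSpace E] [NormedSpace ℝ E] [CompleteSpace E]
    {μ : Measure E} [IsProbabilityMeasure μ] (hμ : Integrable id μ) {f : E → E} {r : ℝ}
    (hf : ∀ x y, f x - f y = r • (x - y)) : ∫ x, f x ∂μ = f (∫ x, x ∂μ) := by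
  obtain ⟨t, ht⟩ : ∃ t, ∀ x, f x = r • x + t :=
    ⟨f 0, fun x => by rw [← sub_eq_iff_eq_add, hf, sub_zero]⟩
  simp_rw [ht]
  rw [integral_add (by exact hμ.smul r) (integrable_const _), integral_smul]
  simp

variable [InnerProductSpace ℝ E] [CompleteSpace E]

lemma integral_norm_add_const_sq {Ω : Type*} [MeasurableSpace Ω] {μ : Measure Ω}
    [IsProbabilityMeasure μ] {Y : Ω → E} (hY : MemLp Y 2 μ) (hY₀ : ∫ x, Y x ∂μ = 0) (w : E) :
    ∫ x, ‖Y x + w‖ ^ 2 ∂μ = ∫ x, ‖Y x‖ ^ 2 ∂μ + ‖w‖ ^ 2 := by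
  have hsq : Integrable (fun x => ‖Y x‖ ^ 2) μ := hY.norm.integrable_sq
  have hYint : Integrable Y μ := hY.integrable one_le_two
  have hinner : Integrable (fun x => 2 * inner ℝ (Y x) w) μ := (hYint.inner_const w).const_mul 2
  have hcross : ∫ x, inner ℝ (Y x) w ∂μ = 0 := by
    simp_rw [real_inner_comm w, integral_inner hYint, hY₀, inner_zero_right]
  simp only [norm_add_sq_real]
  rw [integral_add (by exact hsq.add hinner) (integrable_const _), integral_add hsq hinner,
    integral_const_mul, hcross]
  simp

lemma integral_norm_sub_sq_of_sub_eq_smul [MeasurableSpace E] {μ : Measure E}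
    [IsProbabilityMeasure μ] (hμ : MemLp id 2 μ) {f : E → E} {r : ℝ}
    (hf : ∀ x y, f x - f y = r • (x - y)) {c : E} (hc : ∫ x, x ∂μ = c) (b : E) :
    ∫ x, ‖f x - b‖ ^ 2 ∂μ = r ^ 2 * ∫ x, ‖x - c‖ ^ 2 ∂μ + ‖f c - b‖ ^ 2 := by
  have hY : MemLp (fun x => f x - f c) 2 μ := by
    simp_rw [hf]
    exact (hμ.sub (memLp_const c)).const_smul r
  have hY₀ : ∫ x, f x - f c ∂μ = 0 := by
    have hfsub (x y : E) : (f x - f c) - (f y - f c) = r • (x - y) := by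
      rw [sub_sub_sub_cancel_right, hf]
    rw [integral_of_sub_eq_smul (hμ.integrable one_le_two) hfsub, hc, sub_self]
  calc ∫ x, ‖f x - b‖ ^ 2 ∂μ = ∫ x, ‖(f x - f c) + (f c - b)‖ ^ 2 ∂μ := by
        simp only [sub_add_sub_cancel]
    _ = r ^ 2 * ∫ x, ‖x - c‖ ^ 2 ∂μ + ‖f c - b‖ ^ 2 := by
        rw [integral_norm_add_const_sq hY hY₀]
        simp only [hf, norm_smul, mul_pow, Real.norm_eq_abs, sq_abs, integral_const_mul]

end SecondMoment

section Homothety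

open AffineMap Set Function NNReal

section NormedSpace

variable {E : Type*} [NormedAddCommGroup E] [NormedSpace ℝ E]

lemma homothety_sub_homothety (v : E) (r : ℝ) (x y : E) :
    homothety v r x - homothety v r y = r • (x - y) := by
  simp only [homothety_apply, vsub_eq_sub, vadd_eq_add]
  module

lemma lipschitzWith_homothety (v : E) (r : ℝ) : LipschitzWith ‖r‖₊ (homothety v r) :=
  LipschitzWith.of_dist_le_mul fun x y => by
    simp [dist_eq_norm, homothety_sub_homothety, norm_smul]

lemma measurableEmbedding_homothety [MeasurableSpace E] [BorelSpace E] (v : E) {r : ℝ}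
    (hr : r ≠ 0) : MeasurableEmbedding (homothety v r) := by
  have hinj : Injective (homothety v r) := fun x y hxy => by
    simpa [hr, sub_eq_zero, hxy] using (homothety_sub_homothety v r x y).symm
  exact (Topology.IsOpenEmbedding.of_continuous_injective_isOpenMap (homothety_continuous v r) hinj
    (homothety_isOpenMap v r hr)).measurableEmbedding

lemma memLp_homothety [MeasurableSpace E] {μ : Measure E} [IsFiniteMeasure μ] {q : ℝ≥0∞}
    (hμ : MemLp id q μ) (v : E) (r : ℝ) : MemLp (homothety v r) q μ :=
  ((hμ.sub (memLp_const v)).const_smul r).add (memLp_const v)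

lemma mapsTo_homothety_of_convex {K : Set E} (hK : Convex ℝ K) {v : E} (hv : v ∈ K) {r : ℝ}
    (hr₀ : 0 ≤ r) (hr₁ : r ≤ 1) : MapsTo (homothety v r) K K := fun x hx => by
  simpa only [homothety_eq_lineMap] using hK.lineMap_mem hv hx ⟨hr₀, hr₁⟩

lemma disjoint_homothety_image {K : Set E} (hK : Bornology.IsBounded K) {v w : E} {r : ℝ}
    (h : |r| * Metric.diam K < |1 - r| * dist v w) :
    Disjoint (homothety v r '' K) (homothety w r '' K) := by
  rw [disjoint_left]
  rintro _ ⟨x, hx, rfl⟩ ⟨y, hy, hyx⟩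
  have hvw : (1 - r) • (v - w) = r • (y - x) := by
    simp only [homothety_apply, vsub_eq_sub, vadd_eq_add] at hyx
    linear_combination (norm := module) -hyx
  have hdist : |1 - r| * dist v w = |r| * dist y x := by
    simpa only [norm_smul, Real.norm_eq_abs, dist_eq_norm] using congrArg norm hvw
  have hle : |r| * dist y x ≤ |r| * Metric.diam K := by
    gcongr
    exact Metric.dist_le_diam_of_mem hK hy hx
  linarith

lemma IsSelfSimilar.integral_id_homothety {ι : Type*} [Fintype ι] [CompleteSpace E]
    [MeasurableSpace E] [BorelSpace E] {p : ι → ℝ≥0} {v : ι → E} {r : ℝ} {μ : Measure E}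
    [IsProbabilityMeasure μ] (hr₀ : r ≠ 0) (hr₁ : r ≠ 1)
    (hμ : IsSelfSimilar p (fun i => homothety (v i) r) μ) (hint : Integrable id μ) :
    ∫ x, x ∂μ = ∑ i, p i • v i := by
  have hemb (i : ι) := measurableEmbedding_homothety (v i) hr₀
  have hp := hμ.sum_weights_eq_one fun i => (hemb i).measurable
  set m := ∫ x, x ∂μ with hm
  have hfix : m = ∑ i, p i • homothety (v i) r m := by
    conv_lhs => rw [hm, hμ.integral_eq hemb fun i =>
      memLp_one_iff_integrable.1 (memLp_homothety (memLp_one_iff_integrable.2 hint) (v i) r)]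
    simp only [integral_of_sub_eq_smul hint (homothety_sub_homothety _ r), ← hm]
  have hmean : m = r • m + (1 - r) • ∑ i, p i • v i := by
    conv_lhs => rw [hfix]
    simp only [homothety_eq_lineMap, lineMap_apply_module, smul_add, Finset.sum_add_distrib,
      ← Finset.sum_smul, hp, one_smul, Finset.smul_sum, smul_comm (1 - r), add_comm]
  have hscaled : (1 - r) • m = (1 - r) • ∑ i, p i • v i := by
    linear_combination (norm := module) hmean
  exact smul_right_injective E (sub_ne_zero.2 hr₁.symm) hscaled

end NormedSpace

variable {ι E : Type*} [Fintype ι] [NormedAddCommGroup E] [InnerProductSpace ℝ E] [CompleteSpace E]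
  [MeasurableSpace E] [BorelSpace E] {p : ι → ℝ≥0} {v : ι → E} {r : ℝ} {μ : Measure E}
  [IsProbabilityMeasure μ]

lemma IsSelfSimilar.integral_norm_sub_sq_homothety (hr₀ : r ≠ 0) (hr₁ : |r| < 1)
    (hμ : IsSelfSimilar p (fun i => homothety (v i) r) μ) (hL2 : MemLp id 2 μ) {c : E}
    (hc : ∫ x, x ∂μ = c) :
    ∫ x, ‖x - c‖ ^ 2 ∂μ = (1 - r) / (1 + r) * ∑ i, p i * ‖v i - c‖ ^ 2 := by
  have hemb (i : ι) := measurableEmbedding_homothety (v i) hr₀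
  have hp : ∑ i, (p i : ℝ) = 1 := by
    exact_mod_cast hμ.sum_weights_eq_one fun i => (hemb i).measurable
  set V := ∫ x, ‖x - c‖ ^ 2 ∂μ with hV
  have hsq (i : ι) : Integrable (fun x => ‖homothety (v i) r x - c‖ ^ 2) μ :=
    ((memLp_homothety hL2 (v i) r).sub (memLp_const c)).norm.integrable_sq
  have hpiece (i : ι) :
      ∫ x, ‖homothety (v i) r x - c‖ ^ 2 ∂μ = r ^ 2 * V + (1 - r) ^ 2 * ‖v i - c‖ ^ 2 := by
    rw [integral_norm_sub_sq_of_sub_eq_smul hL2 (homothety_sub_homothety (v i) r) hc c,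
      ← dist_eq_norm, dist_homothety_self, dist_eq_norm, mul_pow, Real.norm_eq_abs, sq_abs]
  have hvar : V = r ^ 2 * V + (1 - r) ^ 2 * ∑ i, p i * ‖v i - c‖ ^ 2 := by
    conv_lhs => rw [hV, hμ.integral_eq hemb hsq]
    simp only [hpiece, NNReal.smul_def, smul_eq_mul, mul_add, Finset.sum_add_distrib,
      ← Finset.sum_mul, hp, one_mul, Finset.mul_sum, mul_left_comm]
  have hr_pos : 0 < 1 + r := by linarith [(abs_lt.1 hr₁).1]
  have hr_ne : 1 - r ≠ 0 := by linarith [(abs_lt.1 hr₁).2]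
  field_simp
  refine mul_left_cancel₀ hr_ne ?_
  linear_combination hvar

theorem stmt_3_general (hr₀ : 0 < r) (hr₁ : r < 1)
    (hμ : IsSelfSimilar p (fun i => homothety (v i) r) μ)
    (hdisj : Pairwise (Disjoint on fun i => homothety (v i) r '' convexHull ℝ (range v)))
    {c : E} (hc : ∑ i, p i • v i = c) {k : ℕ} (ω : Fin k → ι) (b : E) :
    ∫ x in wordMap (fun i => homothety (v i) r) ω '' convexHull ℝ (range v), ‖x - b‖ ^ 2 ∂μ
      = (∏ i, (p (ω i) : ℝ)) * ((r ^ k) ^ 2 * ((1 - r) / (1 + r) * ∑ i, p i * ‖v i - c‖ ^ 2)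
          + ‖wordMap (fun i => homothety (v i) r) ω c - b‖ ^ 2) := by
  have hrabs : |r| < 1 := abs_lt.2 ⟨by linarith, hr₁⟩
  have hemb (i : ι) := measurableEmbedding_homothety (v i) hr₀.ne'
  have hcomp : IsCompact (convexHull ℝ (range v)) := (finite_range v).isCompact_convexHull ℝ
  have hmaps (i : ι) := mapsTo_homothety_of_convex (convex_convexHull ℝ (range v))
    (subset_convexHull ℝ _ (mem_range_self i)) hr₀.le hr₁.le
  have hne : (range v).Nonempty := by
    rw [range_nonempty_iff_nonempty, ← not_isEmpty_iff]
    intro _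
    simpa using hμ.sum_weights_eq_one fun i => (hemb i).measurable
  have hsupp : ∀ᵐ x ∂μ, x ∈ convexHull ℝ (range v) :=
    hμ.ae_mem (by rwa [← NNReal.coe_lt_coe, coe_nnnorm])
      (fun i => lipschitzWith_homothety (v i) r) hcomp.isClosed hne.convexHull hmaps
  have hL2 := memLp_id_of_ae_mem_isCompact hcomp hsupp 2
  have hmean : ∫ x, x ∂μ = c :=
    (hμ.integral_id_homothety hr₀.ne' hr₁.ne (hL2.integrable one_le_two)).trans hc
  have hword := wordMap_sub (S := fun i => homothety (v i) r)
    (fun i => homothety_sub_homothety (v i) r) ω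
  rw [hμ.restrict_wordMap_image hemb hsupp hmaps hdisj, integral_smul_nnreal_measure,
    (measurableEmbedding_wordMap hemb ω).integral_map,
    integral_norm_sub_sq_of_sub_eq_smul hL2 hword hmean,
    hμ.integral_norm_sub_sq_homothety hr₀.ne' hrabs hL2 hmean, NNReal.smul_def, smul_eq_mul,
    NNReal.coe_prod]

end Homothety

section Triangle

open AffineMap Set Function NNReal

/-- The vertices of `Tri`; the `i`-th one is the fixed point of `Smap i`. -/
def triVertex : Fin 3 → E2 := ![pt 0 0, pt 1 0, pt (1 / 2) (√3 / 2)]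

/-- The centroid of `Tri`, the point `c` of the statement. -/
def triCentroid : E2 := pt (1 / 2) (√3 / 6)

lemma Smap_eq_homothety : Smap = fun i => ⇑(homothety (triVertex i) (1 / 3 : ℝ)) := by
  funext i x
  ext j
  fin_cases i <;> fin_cases j <;>
    simp [Smap, S1, S2, S3, triVertex, pt, homothety_apply] <;> ring

lemma Tri_eq_convexHull : Tri = convexHull ℝ (range triVertex) := by
  rw [Tri]
  congr 1
  ext x
  simp only [triVertex, Matrix.range_cons, Matrix.range_empty]
  grind

lemma dist_triVertex {i j : Fin 3} (hij : i ≠ j) : dist (triVertex i) (triVertex j) = 1 := by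
  rw [EuclideanSpace.dist_eq, Real.sqrt_eq_one, Fin.sum_univ_two]
  fin_cases i <;> fin_cases j <;>
    simp [triVertex, pt, Real.dist_eq, div_pow] at hij ⊢ <;> norm_num

lemma diam_convexHull_triVertex_le : Metric.diam (convexHull ℝ (range triVertex)) ≤ 1 := by
  rw [convexHull_diam]
  refine Metric.diam_le_of_forall_dist_le zero_le_one ?_
  rintro _ ⟨i, rfl⟩ _ ⟨j, rfl⟩
  rcases eq_or_ne i j with rfl | hij
  · simp
  · exact (dist_triVertex hij).le

lemma pairwise_disjoint_homothety_triVertex : Pairwise (Disjoint on fun i =>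
    homothety (triVertex i) (1 / 3 : ℝ) '' convexHull ℝ (range triVertex)) := fun i j hij => by
  refine disjoint_homothety_image ((finite_range triVertex).isCompact_convexHull ℝ).isBounded ?_
  rw [dist_triVertex hij, abs_of_pos (by norm_num), abs_of_pos (by norm_num)]
  linarith [diam_convexHull_triVertex_le]

lemma average_triVertex : ∑ i, (3⁻¹ : ℝ≥0) • triVertex i = triCentroid := by
  ext j
  fin_cases j <;>
    simp [Fin.sum_univ_three, triVertex, triCentroid, pt, NNReal.smul_def] <;> ring

lemma norm_triVertex_sub_triCentroid_sq (i : Fin 3) : ‖triVertex i - triCentroid‖ ^ 2 = 1 / 3 := by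
  rw [EuclideanSpace.real_norm_sq_eq, Fin.sum_univ_two]
  have hsqrt : √3 ^ 2 = 3 := Real.sq_sqrt (by norm_num)
  fin_cases i <;> simp [triVertex, triCentroid, pt] <;> nlinarith

lemma variance_triVertex :
    (1 - 1 / 3) / (1 + 1 / 3) * ∑ i, ((3⁻¹ : ℝ≥0) : ℝ) * ‖triVertex i - triCentroid‖ ^ 2
      = 1 / 6 := by
  simp only [norm_triVertex_sub_triCentroid_sq, Fin.sum_univ_three, NNReal.coe_inv,
    NNReal.coe_ofNat]
  norm_num

lemma isSelfSimilar_homothety_triVertex {P : Measure E2}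
    (hP : P = (3 : ℝ≥0∞)⁻¹ • (P.map S1 + P.map S2 + P.map S3)) :
    IsSelfSimilar (fun _ => 3⁻¹) (fun i => homothety (triVertex i) (1 / 3 : ℝ)) P := by
  rw [← Smap_eq_homothety, IsSelfSimilar, ← Finset.smul_sum, Fin.sum_univ_three]
  simpa [Smap, ENNReal.smul_def] using hP

lemma Sword_eq_wordMap {k : ℕ} (ω : Fin k → Fin 3) :
    Sword ω = wordMap (fun i => homothety (triVertex i) (1 / 3 : ℝ)) ω := by
  rw [← Smap_eq_homothety]
  rfl

end Triangle

/-- For the R-measure P, c = (1/2, √3/6), k ≥ 1, ω ∈ {1,2,3}^k, and b ∈ ℝ²: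
∫_{△_ω} ‖x − b‖² dP = (1/3^k)((1/9^k)(1/6) + ‖S_ω(c) − b‖²). -/
theorem stmt_3 (P : Measure E2) [IsProbabilityMeasure P]
    (hP : P = (3 : ℝ≥0∞)⁻¹ • (P.map S1 + P.map S2 + P.map S3))
    (k : ℕ) (hk : 1 ≤ k) (ω : Fin k → Fin 3) (b : E2) :
    ∫ x in Sword ω '' Tri, ‖x - b‖ ^ 2 ∂P
      = (1 / 3 ^ k : ℝ) * ((1 / 9 ^ k) * (1 / 6)
          + ‖Sword ω (pt (1/2) (Real.sqrt 3 / 6)) - b‖ ^ 2) := by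
  have hpow : ((1 / 3 : ℝ) ^ k) ^ 2 = 1 / 9 ^ k := by
    rw [pow_right_comm, ← one_div_pow]
    norm_num
  rw [Sword_eq_wordMap, Tri_eq_convexHull, stmt_3_general (by norm_num) (by norm_num)
    (isSelfSimilar_homothety_triVertex hP) pairwise_disjoint_homothety_triVertex average_triVertex,
    variance_triVertex, hpow]
  simp [triCentroid]

end
end

section
/- Let P be the R-measure, k ≥ 1, and ω ∈ {1,2,3}^k. If α is an optimal set of n-means for P, then S_ω(α) := {S_ω(a) : a ∈ α} is an optimal set of n-means for the image measure P∘S_ω⁻¹. Conversely, if β is an optimal set of n-means for P∘S_ω⁻¹, then S_ω⁻¹(β) := {S_ω⁻¹(a) : a ∈ β} is an optimal set of n-means for P. -/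
open MeasureTheory ENNReal

noncomputable section

/-!
A similarity `e` of ratio `r` multiplies every distance by `r`, so the cost of quantizing `μ` by
`α` is multiplied by `r ^ p` when `μ` is pushed forward along `e` and `α` is replaced by `e '' α`.
Since `e` is a bijection, `α ↦ e '' α` matches up the competing sets of at most `n` points, so it
preserves minimality. Each `S_ω` is such a similarity.
-/

section Quantization

variable {X Y : Type*} [PseudoEMetricSpace X] [PseudoEMetricSpace Y]

theorem coe_ratio_ne_zero {F : Type*} [FunLike F X Y] [DilationClass F X Y] (e : F) :
    (Dilation.ratio e : ℝ≥0∞) ≠ 0 :=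
  coe_ne_zero.2 (Dilation.ratio_ne_zero e)

theorem infEDist_image_dilation {F : Type*} [FunLike F X Y] [DilationClass F X Y] (e : F) (x : X)
    (s : Set X) :
    Metric.infEDist (e x) (e '' s) = Dilation.ratio e * Metric.infEDist x s := by
  simp only [Metric.infEDist, iInf_image, Dilation.edist_eq,
    ENNReal.mul_iInf_of_ne (coe_ratio_ne_zero e) coe_ne_top]

theorem infEDist_rpow {p : ℝ} (hp : 0 < p) (x : X) (s : Set X) :
    Metric.infEDist x s ^ p = ⨅ a ∈ s, edist x a ^ p :=
  (orderIsoRpow p hp).map_iInf₂ fun a (_ : a ∈ s) => edist x a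

variable [MeasurableSpace X] [MeasurableSpace Y]

/-- The order-`p` quantization cost of a set `α` of points for the measure `μ`, that is, the
integral of the `p`-th power of the distance to `α`. -/
def quantizationCost (p : ℝ) (μ : Measure X) (α : Set X) : ℝ≥0∞ :=
  ∫⁻ x, Metric.infEDist x α ^ p ∂μ

/-- The set `α` has at most `n` points and minimizes the order-`p` quantization cost of `μ` among
all such sets. Using `Set.encard` builds finiteness of the sets into the cardinality bound. -/
def IsOptimalQuantizer (p : ℝ) (μ : Measure X) (n : ℕ) (α : Set X) : Prop :=
  α.encard ≤ n ∧ IsMinOn (quantizationCost p μ) {β | β.encard ≤ n} α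

variable [OpensMeasurableSpace X] [BorelSpace Y]

theorem quantizationCost_map_image {F : Type*} [FunLike F X Y] [DilationClass F X Y] (p : ℝ)
    (μ : Measure X) (e : F) (α : Set X) :
    quantizationCost p (μ.map e) (e '' α) =
      (Dilation.ratio e : ℝ≥0∞) ^ p * quantizationCost p μ α := by
  have rpow_infEDist_image (x : X) : Metric.infEDist (e x) (e '' α) ^ p =
      (Dilation.ratio e : ℝ≥0∞) ^ p * Metric.infEDist x α ^ p := by
    rw [infEDist_image_dilation, mul_rpow_eq_ite, if_neg (by simp [Dilation.ratio_ne_zero])]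
  calc quantizationCost p (μ.map e) (e '' α)
      = ∫⁻ x, Metric.infEDist (e x) (e '' α) ^ p ∂μ :=
        lintegral_map (measurable_infEDist.pow_const p) (Dilation.toContinuous e).measurable
    _ = ∫⁻ x, (Dilation.ratio e : ℝ≥0∞) ^ p * Metric.infEDist x α ^ p ∂μ := by
        simp only [rpow_infEDist_image]
    _ = (Dilation.ratio e : ℝ≥0∞) ^ p * quantizationCost p μ α :=
        lintegral_const_mul _ (measurable_infEDist.pow_const p)

theorem isOptimalQuantizer_map_image_iff (p : ℝ) (μ : Measure X) (e : X ≃ᵈ Y) (n : ℕ)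
    (α : Set X) :
    IsOptimalQuantizer p (μ.map e) n (e '' α) ↔ IsOptimalQuantizer p μ n α := by
  have ratio_rpow_ne_zero : (Dilation.ratio e : ℝ≥0∞) ^ p ≠ 0 := by
    simp [rpow_eq_zero_iff, Dilation.ratio_ne_zero]
  have ratio_rpow_ne_top : (Dilation.ratio e : ℝ≥0∞) ^ p ≠ ∞ :=
    rpow_ne_top_of_ne_zero (coe_ratio_ne_zero e) coe_ne_top
  simp only [IsOptimalQuantizer, isMinOn_iff, Set.mem_ofPred_eq,
    e.surjective.image_surjective.forall, e.injective.encard_image, quantizationCost_map_image,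
    ENNReal.mul_le_mul_iff_right ratio_rpow_ne_zero ratio_rpow_ne_top]

theorem stmt_10_general (p : ℝ) (μ : Measure X) (e : X ≃ᵈ Y) (n : ℕ) :
    (∀ α : Set X, IsOptimalQuantizer p μ n α → IsOptimalQuantizer p (μ.map e) n (e '' α))
      ∧ (∀ β : Set Y, IsOptimalQuantizer p (μ.map e) n β →
          IsOptimalQuantizer p μ n (e ⁻¹' β)) := by
  refine ⟨fun α => (isOptimalQuantizer_map_image_iff p μ e n α).2, fun β hβ => ?_⟩
  rwa [← isOptimalQuantizer_map_image_iff p μ e, Set.image_preimage_eq β e.surjective]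

end Quantization

theorem err_eq_quantizationCost_two (μ : Measure E2) (α : Set E2) :
    err μ α = quantizationCost 2 μ α := by
  simp only [err, quantizationCost, infEDist_rpow two_pos, edist_dist, dist_eq_norm, rpow_two,
    ofReal_pow (norm_nonneg _)]

theorem isOptimal_iff_isOptimalQuantizer_two (μ : Measure E2) (n : ℕ) (α : Set E2) :
    IsOptimal μ n α ↔ IsOptimalQuantizer 2 μ n α := by
  simp only [IsOptimal, IsOptimalQuantizer, quantErr, ← Set.encard_le_coe_iff_finite_ncard_le,
    ← and_assoc, isMinOn_iff, Set.mem_ofPred_eq, ← err_eq_quantizationCost_two]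
  refine and_congr_right fun hα => ⟨fun h β hβ => h.trans_le (iInf₂_le β hβ), fun h => ?_⟩
  exact le_antisymm (le_iInf₂ h) (iInf₂_le α hα)

theorem exists_dilationEquiv_coe_eq_foldr {X : Type*} [PseudoEMetricSpace X] (l : List (X → X))
    (hl : ∀ g ∈ l, ∃ e : X ≃ᵈ X, ⇑e = g) :
    ∃ e : X ≃ᵈ X, ⇑e = fun x => l.foldr (fun g y => g y) x := by
  induction l with
  | nil => exact ⟨1, rfl⟩
  | cons g l ih =>
    obtain ⟨⟨e, rfl⟩, hl'⟩ := List.forall_mem_cons.1 hl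
    obtain ⟨e', he'⟩ := ih hl'
    exact ⟨e * e', by rw [DilationEquiv.coe_mul, he']; rfl⟩

theorem exists_dilationEquiv_coe_eq_Smap (i : Fin 3) : ∃ e : E2 ≃ᵈ E2, ⇑e = Smap i := by
  have third_ne_zero : (3 : ℝ)⁻¹ ≠ 0 := by norm_num
  fin_cases i
  · exact ⟨.smulTorsor 0 third_ne_zero, funext fun x => add_zero ((3 : ℝ)⁻¹ • x)⟩
  · exact ⟨.smulTorsor (pt (2/3) 0) third_ne_zero, rfl⟩
  · exact ⟨.smulTorsor (pt (1/3) (Real.sqrt 3 / 3)) third_ne_zero, rfl⟩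

theorem exists_dilationEquiv_coe_eq_Sword {k : ℕ} (ω : Fin k → Fin 3) :
    ∃ e : E2 ≃ᵈ E2, ⇑e = Sword ω :=
  exists_dilationEquiv_coe_eq_foldr _ <|
    List.forall_mem_ofFn_iff.2 fun i => exists_dilationEquiv_coe_eq_Smap (ω i)

/-- For the R-measure P, k ≥ 1 and ω ∈ {1,2,3}^k: if α is an optimal set of n-means for P
then S_ω(α) is an optimal set of n-means for the image measure P∘S_ω⁻¹; conversely, if β is
an optimal set of n-means for P∘S_ω⁻¹ then S_ω⁻¹(β) is an optimal set of n-means for P. -/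
theorem stmt_10 (P : Measure E2) [IsProbabilityMeasure P]
    (hP : P = (3 : ℝ≥0∞)⁻¹ • (P.map S1 + P.map S2 + P.map S3))
    (k : ℕ) (hk : 1 ≤ k) (ω : Fin k → Fin 3) (n : ℕ) :
    (∀ α : Set E2, IsOptimal P n α → IsOptimal (P.map (Sword ω)) n (Sword ω '' α))
      ∧ (∀ β : Set E2, IsOptimal (P.map (Sword ω)) n β →
          IsOptimal P n (Sword ω ⁻¹' β)) := by
  obtain ⟨e, he⟩ := exists_dilationEquiv_coe_eq_Sword ω
  simpa only [isOptimal_iff_isOptimalQuantizer_two, he] using stmt_10_general 2 P e n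

end
end
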